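/- Let θ be a cylindric diagram in C_ω, let ξ ∈ I_n(θ), and let w_ξ ∈ W be the common value of w_{ξ,S} over standard tableaux S on ξ. Then the map S ↦ (con(S⁻¹(1)), con(S⁻¹(2)), …, con(S⁻¹(n))) is a bijection from the set of standard tableaux on ξ to the set of reduced words for w_ξ, i.e. sequences (i₁,…,i_n) in ℤ/κℤ with s_{i₁} s_{i₂} ⋯ s_{i_n} = w_ξ and ℓ(w_ξ) = n. -/

import Mathlib

/-!
The boundary of a cylindric diagram `θ` is a periodic lattice path. On the diagonal of content `j`
the diagram consists of the cells `(c, c + j)` with `c ≤ H_j`, where `H_j - H_{j+1} ∈ {0, 1}` and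
`H_{j-κ} = H_j + m`. Hence `h_j = H_j + (m/κ) j` is a function on `ℤ/κℤ`, and the height vector
`λ(θ) = Σ h_i α_i` is an element of `h*` that determines `θ`. Its pairing with `α_i^∨` is the
difference of two consecutive slopes, so it lies in `{-1, 0, 1}`, and it equals `1` exactly when a
cell of content `i` can be removed from `θ`. In that case `s_i λ(θ) = λ(θ) - α_i` is the height
vector of `θ` without that cell (`Rep.remove`, `Rep.exists_min`).

Consequently `w_ξ` maps `λ(θ \ ξ)` to `λ(θ)` (`RemSeq.rep`), and this raises the sum of the
coordinates by `n`. A simple reflection raises this sum by at most one on vectors with slopes in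
`{0, 1}`, a class stable under all reflections (`Good.act`, `wordProd_good`), so every word for
`w_ξ` has length at least `n`. In a word of length `n` every letter must remove a cell, so it is the
word of a sequence of removals leading from `θ` to a diagram with height vector `λ(θ \ ξ)`, that is,
of a tableau on `ξ` (`exists_remSeq`, `Rep.set_ext`).

That all tableaux have the same product holds because cells with equal or adjacent contents are
comparable, so reflections of incomparable cells commute (`wordProd_perm`). A tableau is recovered
from its word because the cells of a given content form a chain.
-/

namespace CylPaper

/-! ## The cylinder and its order -/

abbrev Z2 : Type := ℤ × ℤ

/-- The partial order on ℤ²: (a,b) ≤ (c,d) iff a ≥ c and b ≥ d. -/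
def le2 (x y : Z2) : Prop := y.1 ≤ x.1 ∧ y.2 ≤ x.2

/-- The period ω = (m, -ℓ). -/
def om (m l : ℕ) : Z2 := ((m : ℤ), -(l : ℤ))

/-- The cylinder C_ω = ℤ²/ℤω. -/
abbrev Cyl (m l : ℕ) : Type := Z2 ⧸ AddSubgroup.zmultiples (om m l)

/-- The natural projection π : ℤ² → C_ω. -/
def pr (m l : ℕ) : Z2 →+ Cyl m l := QuotientAddGroup.mk' _

/-- The induced order relation on the cylinder: x ≤ y iff there are lifts with x̃ ≤ ỹ. -/
def cle (m l : ℕ) (x y : Cyl m l) : Prop :=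
  ∃ a b : Z2, pr m l a = x ∧ pr m l b = y ∧ le2 a b

/-- A cylindric diagram: a non-trivial order filter of C_ω. -/
def IsCylindric (m l : ℕ) (θ : Set (Cyl m l)) : Prop :=
  θ.Nonempty ∧ θ ≠ Set.univ ∧ ∀ x ∈ θ, ∀ y, cle m l x y → y ∈ θ

/-- A periodic diagram of period ω: a non-trivial order filter of ℤ² with Θ + ω = Θ. -/
def IsPeriodic (m l : ℕ) (Θ : Set Z2) : Prop :=
  Θ.Nonempty ∧ Θ ≠ Set.univ ∧ (∀ x ∈ Θ, ∀ y, le2 x y → y ∈ Θ) ∧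
    (fun p => p + om m l) '' Θ = Θ

/-- A proper order ideal ξ of the sub-poset θ of C_ω. -/
def IsProperIdealOf (m l : ℕ) (θ ξ : Set (Cyl m l)) : Prop :=
  ξ ⊆ θ ∧ ξ ≠ θ ∧ ∀ x ∈ ξ, ∀ y ∈ θ, cle m l y x → y ∈ ξ

/-- A proper order ideal of the whole cylinder C_ω. -/
def IsProperIdealC (m l : ℕ) (J : Set (Cyl m l)) : Prop :=
  J ≠ Set.univ ∧ ∀ x ∈ J, ∀ y, cle m l y x → y ∈ J

/-- A proper order filter of the whole cylinder C_ω. -/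
def IsProperFilterC (m l : ℕ) (J : Set (Cyl m l)) : Prop :=
  J ≠ Set.univ ∧ ∀ x ∈ J, ∀ y, cle m l x y → y ∈ J

/-! ## The content map -/

/-- The content on ℤ²: (a,b) ↦ b - a mod κ (κ = m + ℓ). -/
def conHom (m l : ℕ) : Z2 →+ ZMod (m + l) where
  toFun p := ((p.2 - p.1 : ℤ) : ZMod (m + l))
  map_zero' := by simp
  map_add' a b := by
    simp only [Prod.fst_add, Prod.snd_add]
    push_cast
    ring

lemma conHom_om (m l : ℕ) : conHom m l (om m l) = 0 := by
  have h : ((m + l : ℕ) : ZMod (m + l)) = 0 := ZMod.natCast_self _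
  show ((((om m l).2 - (om m l).1 : ℤ)) : ZMod (m + l)) = 0
  simp only [om]
  push_cast at h ⊢
  linear_combination -h

/-- The content map con : C_ω → ℤ/κℤ. -/
def con (m l : ℕ) : Cyl m l →+ ZMod (m + l) :=
  QuotientAddGroup.lift _ (conHom m l) (by
    intro x hx
    obtain ⟨k, rfl⟩ := AddSubgroup.mem_zmultiples_iff.mp hx
    simp only [AddMonoidHom.mem_ker, map_zsmul, conHom_om, smul_zero])

/-! ## The affine root system of type A_{κ-1}^{(1)} -/

/-- h*, with coordinates in the basis {α_i (i ∈ ℤ/κℤ), Λ₀}: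
`(c, t)` stands for `Σ_i c_i α_i + t Λ₀`. -/
abbrev Hw (κ : ℕ) : Type := (ZMod κ → ℚ) × ℚ

/-- The affine Cartan matrix of type A_{κ-1}^{(1)} (valid for κ ≥ 2). -/
def cartan (κ : ℕ) (i j : ZMod κ) : ℚ :=
  (if i = j then 2 else 0) + (if i - j = 1 then -1 else 0) + (if i - j = -1 then -1 else 0)

/-- The simple root α_i. -/
def alphaR (κ : ℕ) (i : ZMod κ) : Hw κ := (Pi.single i 1, 0)

/-- The null root δ = Σ_i α_i. -/
def deltaR (κ : ℕ) : Hw κ := (fun _ => 1, 0)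

/-- The pairing ⟨ζ, α_i^∨⟩. -/
noncomputable def pairSimple (κ : ℕ) (ζ : Hw κ) (i : ZMod κ) : ℚ :=
  (∑ᶠ j, ζ.1 j * cartan κ i j) + ζ.2 * (if i = 0 then 1 else 0)

/-- The pairing ⟨ζ, β^∨⟩ where β = Σ_i k_i α_i lies in the root lattice,
so β^∨ = Σ_i k_i α_i^∨. -/
noncomputable def pairCo (κ : ℕ) (ζ β : Hw κ) : ℚ := ∑ᶠ i, β.1 i * pairSimple κ ζ i

/-- The simple reflection s_i : ζ ↦ ζ - ⟨ζ, α_i^∨⟩ α_i, as a map on h*. -/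
noncomputable def sFun (κ : ℕ) (i : ZMod κ) (ζ : Hw κ) : Hw κ :=
  ζ - pairSimple κ ζ i • alphaR κ i

/-- The element s_{i₁} s_{i₂} ⋯ s_{i_r} of the affine Weyl group
given by a word [i₁, i₂, …, i_r]. -/
noncomputable def wordProd (κ : ℕ) (L : List (ZMod κ)) : Hw κ → Hw κ :=
  (L.map (sFun κ)).foldr (· ∘ ·) id

/-- Membership in the affine Weyl group W (generated by the s_i). -/
def Wmem (κ : ℕ) (w : Hw κ → Hw κ) : Prop := ∃ L : List (ZMod κ), wordProd κ L = w

/-- The Coxeter length: the least r such that w is a product of r simple reflections. -/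
noncomputable def len (κ : ℕ) (w : Hw κ → Hw κ) : ℕ :=
  sInf {r : ℕ | ∃ L : List (ZMod κ), L.length = r ∧ wordProd κ L = w}

/-- Q₊ = Σ_i ℤ≥0 α_i. -/
def QPos (κ : ℕ) : Set (Hw κ) := {x | x.2 = 0 ∧ ∀ i, ∃ n : ℕ, x.1 i = (n : ℚ)}

/-- The set R = WΠ of real roots. -/
def Rset (κ : ℕ) : Set (Hw κ) :=
  {β | ∃ (L : List (ZMod κ)) (i : ZMod κ), β = wordProd κ L (alphaR κ i)}

/-- Positive real roots R₊ = R ∩ Q₊. -/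
def Rpos (κ : ℕ) : Set (Hw κ) := Rset κ ∩ QPos κ

/-- Negative real roots R₋ = -R₊. -/
def Rneg (κ : ℕ) : Set (Hw κ) := {β | -β ∈ Rpos κ}

/-- The inversion set R(w) = R₊ ∩ w R₋. -/
def invSet (κ : ℕ) (w : Hw κ → Hw κ) : Set (Hw κ) := Rpos κ ∩ (w '' Rneg κ)

/-- The weak right Bruhat order on W. -/
def wble (κ : ℕ) (v w : Hw κ → Hw κ) : Prop :=
  Relation.ReflTransGen
    (fun u u' => ∃ i : ZMod κ, u' = u ∘ sFun κ i ∧ len κ u' = len κ u + 1) v w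

/-- The weak Bruhat interval [e, w]. -/
def bint (κ : ℕ) (w : Hw κ → Hw κ) : Set (Hw κ → Hw κ) :=
  {x | wble κ id x ∧ wble κ x w}

/-- A single commutation move on words: swap adjacent letters i, j with i - j ≠ 0, ±1. -/
def CommMove (κ : ℕ) (L1 L2 : List (ZMod κ)) : Prop :=
  ∃ (u v : List (ZMod κ)) (i j : ZMod κ),
    i - j ≠ 0 ∧ i - j ≠ 1 ∧ i - j ≠ -1 ∧
    L1 = u ++ i :: j :: v ∧ L2 = u ++ j :: i :: v

/-- A word is reduced if its length equals the Coxeter length of its product. -/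
def IsReducedWord (κ : ℕ) (L : List (ZMod κ)) : Prop :=
  len κ (wordProd κ L) = L.length

/-- Fully commutative: any reduced word for w can be obtained from any other
using only commutation moves. -/
def FullyComm (κ : ℕ) (w : Hw κ → Hw κ) : Prop :=
  ∀ L1 L2 : List (ZMod κ),
    IsReducedWord κ L1 → wordProd κ L1 = w →
    IsReducedWord κ L2 → wordProd κ L2 = w →
    Relation.ReflTransGen (CommMove κ) L1 L2

/-! ## Hooks, bottom set and weights attached to a cylindric diagram -/

/-- α(x) = α_{con(x)}. -/
def alC (m l : ℕ) (x : Cyl m l) : Hw (m + l) := alphaR (m + l) (con m l x)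

/-- arm(x) = {x + π(0,k) : k ≥ 1} ∩ θ. -/
def armSet (m l : ℕ) (θ : Set (Cyl m l)) (x : Cyl m l) : Set (Cyl m l) :=
  {y | y ∈ θ ∧ ∃ k : ℕ, 1 ≤ k ∧ y = x + pr m l (0, (k : ℤ))}

/-- leg(x) = {x + π(k,0) : k ≥ 1} ∩ θ. -/
def legSet (m l : ℕ) (θ : Set (Cyl m l)) (x : Cyl m l) : Set (Cyl m l) :=
  {y | y ∈ θ ∧ ∃ k : ℕ, 1 ≤ k ∧ y = x + pr m l ((k : ℤ), 0)}

/-- The colored hook length hk(x) = α(x) + Σ_{y∈arm(x)} α(y) + Σ_{y∈leg(x)} α(y). -/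
noncomputable def hk (m l : ℕ) (θ : Set (Cyl m l)) (x : Cyl m l) : Hw (m + l) :=
  alC m l x + (∑ᶠ y ∈ armSet m l θ x, alC m l y) + (∑ᶠ y ∈ legSet m l θ x, alC m l y)

/-- x is the minimum cell b_i of content i in θ. -/
def IsBottomCell (m l : ℕ) (θ : Set (Cyl m l)) (i : ZMod (m + l)) (x : Cyl m l) : Prop :=
  x ∈ θ ∧ con m l x = i ∧ ∀ y ∈ θ, con m l y = i → cle m l x y

/-- The bottom set Γ = {b_i : i ∈ ℤ/κℤ}. -/
def btm (m l : ℕ) (θ : Set (Cyl m l)) : Set (Cyl m l) :=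
  {x | ∃ i, IsBottomCell m l θ i x}

/-- The maximal elements Γ_max of the bottom set. -/
def btmMax (m l : ℕ) (θ : Set (Cyl m l)) : Set (Cyl m l) :=
  {x | x ∈ btm m l θ ∧ ∀ y ∈ btm m l θ, cle m l x y → y = x}

/-- The minimal elements Γ_min of the bottom set. -/
def btmMin (m l : ℕ) (θ : Set (Cyl m l)) : Set (Cyl m l) :=
  {x | x ∈ btm m l θ ∧ ∀ y ∈ btm m l θ, cle m l y x → y = x}

open Classical in
/-- The coefficient a_i of Λ_i in the predominant weight P_θ:
1 if b_i ∈ Γ_max, -1 if b_i ∈ Γ_min, 0 otherwise. -/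
noncomputable def aC (m l : ℕ) (θ : Set (Cyl m l)) (i : ZMod (m + l)) : ℚ :=
  if ∃ x, IsBottomCell m l θ i x ∧ x ∈ btmMax m l θ then 1
  else if ∃ x, IsBottomCell m l θ i x ∧ x ∈ btmMin m l θ then -1 else 0

/-- The pairing ⟨P_θ, β^∨⟩ = Σ_i a_i k_i for β = Σ_i k_i α_i,
where P_θ = Σ_i a_i Λ_i (since ⟨Λ_i, α_j^∨⟩ = δ_{ij} and ⟨Λ_i, d⟩ = 0). -/
noncomputable def pairP (m l : ℕ) (θ : Set (Cyl m l)) (β : Hw (m + l)) : ℚ :=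
  ∑ᶠ i, aC m l θ i * β.1 i

/-- D(P_θ) = {α ∈ R₊ : ⟨P_θ, α^∨⟩ = -1}. -/
def DSet (m l : ℕ) (θ : Set (Cyl m l)) : Set (Hw (m + l)) :=
  {β | β ∈ Rpos (m + l) ∧ pairP m l θ β = -1}

/-- The "inversion set" R(w_θ) = {hk(x) : x ∈ θ}. -/
def RwTheta (m l : ℕ) (θ : Set (Cyl m l)) : Set (Hw (m + l)) := hk m l θ '' θ

/-- The set Π_θ = Π_θ^0 ∪ Π_θ^arm ∪ Π_θ^leg. -/
def PiTheta (m l : ℕ) (θ : Set (Cyl m l)) : Set (Hw (m + l)) :=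
  {v | ∃ x, x ∈ btm m l θ ∧ x ∉ btmMax m l θ ∧ x ∉ btmMin m l θ ∧ v = alC m l x} ∪
  {v | ∃ x, x ∈ btmMax m l θ ∧ v = alC m l x + ∑ᶠ y ∈ armSet m l θ x, alC m l y} ∪
  {v | ∃ x, x ∈ btmMax m l θ ∧ v = alC m l x + ∑ᶠ y ∈ legSet m l θ x, alC m l y}

/-- The modified order ⊴ on R(w_θ): α ⊴ β iff β - α ∈ Σ_{γ∈Π_θ} ℤ≥0 γ. -/
def trile (m l : ℕ) (θ : Set (Cyl m l)) (α β : Hw (m + l)) : Prop :=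
  β - α ∈ AddSubmonoid.closure (PiTheta m l θ)

/-! ## Standard tableaux (encoded by the inverse enumeration e = T⁻¹ : ℤ≥1 → θ) -/

/-- A standard tableau on θ, given by the enumeration e = T⁻¹ : {1,2,…} → θ.
This is precisely the data of an order-preserving bijection T : θ → ℤ≥1. -/
def IsTableau (m l : ℕ) (θ : Set (Cyl m l)) (e : ℕ → Cyl m l) : Prop :=
  Set.InjOn e {a : ℕ | 1 ≤ a} ∧ e '' {a : ℕ | 1 ≤ a} = θ ∧
  ∀ a b : ℕ, 1 ≤ a → 1 ≤ b → cle m l (e a) (e b) → e a ≠ e b → a < b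

/-- A standard tableau on a finite (skew) diagram ξ with |ξ| = n, encoded by
the enumeration e = S⁻¹ : {1,…,n} → ξ. -/
def IsTableauOn (m l : ℕ) (ξ : Set (Cyl m l)) (n : ℕ) (e : ℕ → Cyl m l) : Prop :=
  Set.InjOn e (Set.Icc 1 n) ∧ e '' Set.Icc 1 n = ξ ∧
  ∀ a b : ℕ, a ∈ Set.Icc 1 n → b ∈ Set.Icc 1 n → cle m l (e a) (e b) → e a ≠ e b → a < b

/-- The word (con(e 1), con(e 2), …, con(e n)). -/
def tabWord (m l : ℕ) (e : ℕ → Cyl m l) (n : ℕ) : List (ZMod (m + l)) :=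
  (List.range n).map (fun k => con m l (e (k + 1)))

/-- The semi-infinite Bruhat interval [e, w_{θ,T}) = ⋃_{n≥1} [e, w_{θ,T}[n]]. -/
def semiInt (m l : ℕ) (e : ℕ → Cyl m l) : Set (Hw (m + l) → Hw (m + l)) :=
  ⋃ n ∈ {n : ℕ | 1 ≤ n}, bint (m + l) (wordProd (m + l) (tabWord m l e n))

/-- w is P_θ-pluscule: ⟨P_θ, α^∨⟩ = -1 for every α ∈ R(w). -/
def Pluscule (m l : ℕ) (θ : Set (Cyl m l)) (w : Hw (m + l) → Hw (m + l)) : Prop :=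
  ∀ β ∈ invSet (m + l) w, pairP m l θ β = -1

/-- The generating relation of the heap order ⪯_T on ℤ≥1. -/
def heapRel (m l : ℕ) (e : ℕ → Cyl m l) (a b : ℕ) : Prop :=
  1 ≤ a ∧ a ≤ b ∧
    (con m l (e a) = con m l (e b) ∨
      sFun (m + l) (con m l (e a)) ∘ sFun (m + l) (con m l (e b)) ≠
        sFun (m + l) (con m l (e b)) ∘ sFun (m + l) (con m l (e a)))

/-- The generating relation of the heap order ≤^hp on R(w_θ):
α ≤ β whenever β - α ∈ Q₊ (the ordinary order) and ⟨α, β^∨⟩ ≠ 0. -/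
def hpRel (m l : ℕ) (θ : Set (Cyl m l)) (α β : Hw (m + l)) : Prop :=
  α ∈ RwTheta m l θ ∧ β ∈ RwTheta m l θ ∧ β - α ∈ QPos (m + l) ∧
    pairCo (m + l) α β ≠ 0

/-- v is the Weyl group element w_ξ of a proper order ideal ξ of θ. -/
def IsIdealWord (m l : ℕ) (θ ξ : Set (Cyl m l)) (v : Hw (m + l) → Hw (m + l)) : Prop :=
  IsProperIdealOf m l θ ξ ∧
    ∃ n e, IsTableauOn m l ξ n e ∧ v = wordProd (m + l) (tabWord m l e n)

/-- A proper order ideal of the poset (R(w_θ), ⊴). -/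
def IsProperIdealOfRw (m l : ℕ) (θ : Set (Cyl m l)) (J : Set (Hw (m + l))) : Prop :=
  J ⊆ RwTheta m l θ ∧ J ≠ RwTheta m l θ ∧
    ∀ β ∈ J, ∀ α ∈ RwTheta m l θ, trile m l θ α β → α ∈ J


/-! ### Words acting on the span of the simple roots -/

section Action

variable {κ : ℕ}

/-- The pairing `⟨Σ_j v_j α_j, α_i^∨⟩`, a discrete Laplacian on the cycle `ℤ/κℤ`. -/
def lap (v : ZMod κ → ℚ) (i : ZMod κ) : ℚ := 2 * v i - v (i - 1) - v (i + 1)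

/-- The simple reflection `s_i` on coordinates with respect to the simple roots. -/
def act (i : ZMod κ) (v : ZMod κ → ℚ) : ZMod κ → ℚ := v - Pi.single i (lap v i)

lemma pairSimple_eq [NeZero κ] (ζ : Hw κ) (i : ZMod κ) :
    pairSimple κ ζ i = lap ζ.1 i + ζ.2 * (if i = 0 then 1 else 0) := by
  unfold pairSimple lap
  rw [finsum_eq_sum_of_fintype]
  have h1 : ∀ j : ZMod κ, i - j = 1 ↔ i - 1 = j := fun j =>
    ⟨fun h => by linear_combination h, fun h => by linear_combination h⟩
  have h2 : ∀ j : ZMod κ, i - j = -1 ↔ i + 1 = j := fun j =>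
    ⟨fun h => by linear_combination h, fun h => by linear_combination h⟩
  simp only [cartan, h1, h2, mul_add, Finset.sum_add_distrib, mul_ite, mul_zero,
    Finset.sum_ite_eq, Finset.mem_univ, if_true]
  ring

lemma sFun_eq [NeZero κ] (i : ZMod κ) (v : ZMod κ → ℚ) :
    sFun κ i (v, 0) = (act i v, 0) := by
  simp only [sFun, pairSimple_eq, alphaR, act, zero_mul, add_zero]
  ext j
  · by_cases h : j = i
    · subst h; simp
    · simp [h]
  · simp

lemma sFun_comm [NeZero κ] (i j : ZMod κ) (h0 : i - j ≠ 0) (h1 : i - j ≠ 1) (h2 : i - j ≠ -1) :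
    sFun κ i ∘ sFun κ j = sFun κ j ∘ sFun κ i := by
  have key : ∀ (a b : ZMod κ), a - b ≠ 0 → a - b ≠ 1 → a - b ≠ -1 → ∀ (ζ : Hw κ) (c : ℚ),
      pairSimple κ (ζ - c • alphaR κ b) a = pairSimple κ ζ a := by
    intro a b h0 h1 h2 ζ c
    have e0 : a ≠ b := fun h => h0 (by rw [h, sub_self])
    have e1 : a - 1 ≠ b := fun h => h1 (by rw [← h]; ring)
    have e2 : a + 1 ≠ b := fun h => h2 (by rw [← h]; ring)
    simp [pairSimple_eq, lap, alphaR, e0, e1, e2]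
  funext ζ
  have k1 := key i j h0 h1 h2
  have k2 := key j i (fun h => h0 (by linear_combination -h))
    (fun h => h2 (by linear_combination -h)) (fun h => h1 (by linear_combination -h))
  simp only [Function.comp_apply, sFun] at *
  rw [k1, k2]
  abel

lemma wordProd_cons (i : ZMod κ) (L : List (ZMod κ)) :
    wordProd κ (i :: L) = sFun κ i ∘ wordProd κ L := rfl

/-- All slopes `v_i - v_{i+1} + r` lie in `{0,1}`. With `r = m/κ` this holds for the height vector
of any cylindric diagram; the slopes then record the steps of its boundary path. -/
def Good (r : ℚ) (v : ZMod κ → ℚ) : Prop :=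
  ∀ i, v i - v (i + 1) + r = 0 ∨ v i - v (i + 1) + r = 1

lemma Good.lap_cases {r : ℚ} {v : ZMod κ → ℚ} (h : Good r v) (i : ZMod κ) :
    lap v i = 0 ∨ lap v i = 1 ∨ lap v i = -1 := by
  have h1 := h i
  have h2 := h (i - 1)
  rw [sub_add_cancel] at h2
  unfold lap
  rcases h1 with h1 | h1 <;> rcases h2 with h2 | h2
  · left; linarith
  · right; right; linarith
  · right; left; linarith
  · left; linarith

/-- The reflection `s_i` exchanges the slopes at `i - 1` and `i`. -/
lemma Good.act {r : ℚ} {v : ZMod κ → ℚ} (hκ : 1 < κ) (h : Good r v) (i : ZMod κ) :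
    Good r (act i v) := by
  have : Fact (1 < κ) := ⟨hκ⟩
  intro j
  have h1 := h i
  have h2 := h (i - 1)
  rw [sub_add_cancel] at h2
  by_cases hj : j = i
  · subst hj
    have e : (j + 1 : ZMod κ) ≠ j := by simp
    have : CylPaper.act j v j - CylPaper.act j v (j + 1) + r = v (j - 1) - v j + r := by
      simp [CylPaper.act, lap]; ring
    rw [this]; exact h2
  by_cases hj' : j + 1 = i
  · have e : i - 1 = j := by rw [← hj']; ring
    have : CylPaper.act i v j - CylPaper.act i v (j + 1) + r = v i - v (i + 1) + r := by
      simp [CylPaper.act, lap, hj, hj', e]; ring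
    rw [this]; exact h1
  · have : CylPaper.act i v j - CylPaper.act i v (j + 1) + r = v j - v (j + 1) + r := by
      simp [CylPaper.act, hj, hj']
    rw [this]; exact h j

lemma sum_act [NeZero κ] (i : ZMod κ) (v : ZMod κ → ℚ) :
    ∑ j, act i v j = ∑ j, v j - lap v i := by
  simp [act, Finset.sum_sub_distrib]

lemma lap_act (hκ : 1 < κ) (i : ZMod κ) (v : ZMod κ → ℚ) : lap (act i v) i = -lap v i := by
  have : Fact (1 < κ) := ⟨hκ⟩
  simp [lap, act]
  ring

/-- A word of length `k` raises the total height of a `Good` vector by at most `k`. -/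
lemma wordProd_good [NeZero κ] (hκ : 1 < κ) {r : ℚ} {u : ZMod κ → ℚ} (hu : Good r u)
    (L : List (ZMod κ)) :
    ∃ v, wordProd κ L (u, 0) = (v, 0) ∧ Good r v ∧ ∑ j, v j ≤ ∑ j, u j + L.length := by
  induction L with
  | nil => exact ⟨u, rfl, hu, by simp⟩
  | cons i L ih =>
    obtain ⟨v, h1, h2, h3⟩ := ih
    refine ⟨act i v, ?_, h2.act hκ i, ?_⟩
    · rw [wordProd_cons, Function.comp_apply, h1, sFun_eq]
    · rw [sum_act]
      push_cast [List.length_cons]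
      rcases h2.lap_cases i with h | h | h <;> rw [h] <;> linarith

end Action

/-! ### Cells of the cylinder -/

section Cells

variable {m l : ℕ}

lemma pr_surj (x : Cyl m l) : ∃ a b : ℤ, pr m l (a, b) = x := by
  obtain ⟨⟨a, b⟩, h⟩ := QuotientAddGroup.mk'_surjective _ x
  exact ⟨a, b, h⟩

lemma pr_shift (a b k : ℤ) : pr m l (a + k * m, b - k * l) = pr m l (a, b) := by
  have h : ((a + k * m, b - k * l) : Z2) = (a, b) + k • om m l := by
    simp [om, sub_eq_add_neg]
  rw [h, map_add]
  have : pr m l (k • om m l) = 0 :=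
    (QuotientAddGroup.eq_zero_iff _).mpr (AddSubgroup.mem_zmultiples_iff.mpr ⟨k, rfl⟩)
  rw [this, add_zero]

lemma pr_eq {a b c d : ℤ} (h : pr m l (a, b) = pr m l (c, d)) :
    ∃ k : ℤ, c = a + k * m ∧ d = b - k * l := by
  have h2 : pr m l ((c, d) - (a, b)) = 0 := by rw [map_sub, h, sub_self]
  have h3 := (QuotientAddGroup.eq_zero_iff _).mp h2
  obtain ⟨k, hk⟩ := AddSubgroup.mem_zmultiples_iff.mp h3
  have e1 := congrArg Prod.fst hk
  have e2 := congrArg Prod.snd hk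
  simp [om] at e1 e2
  exact ⟨k, by linarith, by linarith⟩

lemma con_pr (a b : ℤ) : con m l (pr m l (a, b)) = ((b - a : ℤ) : ZMod (m + l)) := rfl

lemma cle_pr {a b c d : ℤ} (h1 : c ≤ a) (h2 : d ≤ b) :
    cle m l (pr m l (a, b)) (pr m l (c, d)) := ⟨(a, b), (c, d), rfl, rfl, h1, h2⟩

lemma cle_refl (x : Cyl m l) : cle m l x x := by
  obtain ⟨a, b, rfl⟩ := pr_surj x
  exact cle_pr le_rfl le_rfl

lemma cle_lift {y : Cyl m l} {c d : ℤ} (h : cle m l y (pr m l (c, d))) :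
    ∃ a b : ℤ, y = pr m l (a, b) ∧ c ≤ a ∧ d ≤ b := by
  obtain ⟨⟨a, b⟩, ⟨c', d'⟩, rfl, h2, h3, h4⟩ := h
  obtain ⟨k, rfl, rfl⟩ := pr_eq h2
  refine ⟨a + k * m, b - k * l, (pr_shift a b k).symm, ?_, ?_⟩
  · simpa using h3
  · simpa using h4

/-- A cell has a lift whose content in `ℤ` is any prescribed representative of its content. -/
lemma lift_con {x : Cyl m l} {j : ℤ} (h : con m l x = (j : ZMod (m + l))) :
    ∃ c : ℤ, x = pr m l (c, c + j) := by
  obtain ⟨a, b, rfl⟩ := pr_surj x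
  rw [con_pr, ← sub_eq_zero, ← Int.cast_sub, ZMod.intCast_zmod_eq_zero_iff_dvd] at h
  obtain ⟨k, hk⟩ := h
  refine ⟨a + k * m, ?_⟩
  rw [← pr_shift a b k]
  congr 2
  push_cast at hk
  linarith

/-- Cells whose contents are equal or adjacent are comparable. -/
lemma comparable {x y : Cyl m l} (h : con m l x - con m l y = 0 ∨ con m l x - con m l y = 1 ∨
    con m l x - con m l y = -1) : cle m l x y ∨ cle m l y x := by
  have key : ∀ d : ℤ, d = 0 ∨ d = 1 ∨ d = -1 → con m l x - con m l y = (d : ZMod (m + l)) →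
      cle m l x y ∨ cle m l y x := by
    intro d hd h
    obtain ⟨a, b, rfl⟩ := pr_surj y
    have h' : con m l x = ((b - a + d : ℤ) : ZMod (m + l)) := by
      rw [con_pr] at h
      push_cast at h ⊢
      linear_combination h
    obtain ⟨c, rfl⟩ := lift_con h'
    by_cases hc : a ≤ c ∧ b ≤ c + (b - a + d)
    · exact Or.inl (cle_pr hc.1 hc.2)
    · refine Or.inr (cle_pr ?_ ?_) <;> omega
  rcases h with h | h | h
  · exact key 0 (by simp) (by simpa using h)
  · exact key 1 (by simp) (by simpa using h)
  · exact key (-1) (by simp) (by simpa using h)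

/-- `θ` is an order filter of the cylinder. -/
def IsFilt (m l : ℕ) (θ : Set (Cyl m l)) : Prop := ∀ x ∈ θ, ∀ y, cle m l x y → y ∈ θ

/-- `x` is a minimal element of `θ`. -/
def IsMinl (m l : ℕ) (θ : Set (Cyl m l)) (x : Cyl m l) : Prop :=
  x ∈ θ ∧ ∀ y ∈ θ, cle m l y x → y = x

lemma IsFilt.diff {θ : Set (Cyl m l)} (h : IsFilt m l θ) {x : Cyl m l} (hx : IsMinl m l θ x) :
    IsFilt m l (θ \ {x}) := by
  rintro y ⟨hy, hyx⟩ z hz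
  refine ⟨h y hy z hz, ?_⟩
  rintro rfl
  exact hyx (hx.2 y hy hz)

end Cells

/-! ### Height vectors of cylindric diagrams -/

section Heights

variable {m l : ℕ}

/-- The cells of `θ` on the diagonal `b - a = j` are those with first coordinate at most `H`, and
the height vector takes the value `H + (m/κ) j` there. The linear correction makes heights
invariant under translation by `ω`, so that they become functions on `ℤ/κℤ`. -/
def RepAt (m l : ℕ) (θ : Set (Cyl m l)) (v : ZMod (m + l) → ℚ) (j : ℤ) : Prop :=
  ∃ H : ℤ, v (j : ZMod (m + l)) = H + (m : ℚ) / ((m : ℚ) + l) * j ∧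
    ∀ c : ℤ, pr m l (c, c + j) ∈ θ ↔ c ≤ H

/-- `v` is the height vector of `θ`. -/
def Rep (m l : ℕ) (θ : Set (Cyl m l)) (v : ZMod (m + l) → ℚ) : Prop := ∀ j, RepAt m l θ v j

lemma RepAt.shift (hm : 1 ≤ m) {θ : Set (Cyl m l)} {v : ZMod (m + l) → ℚ} {j j' : ℤ}
    (hjj : (j : ZMod (m + l)) = (j' : ZMod (m + l))) (h : RepAt m l θ v j) : RepAt m l θ v j' := by
  obtain ⟨H, h1, h2⟩ := h
  have h3 := hjj
  rw [← sub_eq_zero, ← Int.cast_sub, ZMod.intCast_zmod_eq_zero_iff_dvd] at h3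
  obtain ⟨k, hk⟩ := h3
  refine ⟨H + k * m, ?_, ?_⟩
  · rw [← hjj, h1]
    have hj : j = j' + (m + l) * k := by push_cast at hk; linarith
    have h0 : (m : ℚ) + l ≠ 0 := by positivity
    rw [hj]
    push_cast
    field_simp
    ring
  · intro c
    have e : pr m l (c, c + j') = pr m l (c - k * m, c - k * m + j) := by
      rw [← pr_shift (c - k * m) _ k]
      congr 2
      · ring
      · push_cast at hk; linarith
    rw [e, h2]
    constructor <;> intro h <;> linarith

lemma intCast_val [NeZero (m + l)] (i : ZMod (m + l)) :
    (((i.val : ℕ) : ℤ) : ZMod (m + l)) = i := by simp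

lemma exists_rep (hm : 1 ≤ m) {θ : Set (Cyl m l)} (h : IsCylindric m l θ) :
    ∃ v, Rep m l θ v := by
  have : NeZero (m + l) := ⟨by omega⟩
  obtain ⟨⟨x, hx⟩, h2, hf⟩ := h
  obtain ⟨y, hy⟩ := (Set.ne_univ_iff_exists_notMem θ).mp h2
  obtain ⟨a, b, rfl⟩ := pr_surj x
  obtain ⟨a', b', rfl⟩ := pr_surj y
  have hH : ∀ j : ℤ, ∃ H : ℤ, ∀ c : ℤ, pr m l (c, c + j) ∈ θ ↔ c ≤ H := by
    intro j
    obtain ⟨H, hH1, hH2⟩ := Int.exists_greatest_of_bdd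
      (P := fun c => pr m l (c, c + j) ∈ θ)
      ⟨max a' (b' - j), fun z hz => by
        by_contra hlt
        push Not at hlt
        rw [max_lt_iff] at hlt
        exact hy (hf _ hz _ (cle_pr (by omega) (by omega)))⟩
      ⟨min a (b - j), hf _ hx _ (cle_pr (min_le_left _ _) (by
        have := min_le_right a (b - j); omega))⟩
    exact ⟨H, fun c => ⟨hH2 c, fun hc => hf _ hH1 _ (cle_pr hc (by omega))⟩⟩
  choose H hH using hH
  refine ⟨fun i => H (i.val : ℤ) + (m : ℚ) / ((m : ℚ) + l) * ((i.val : ℕ) : ℤ), fun j => ?_⟩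
  refine RepAt.shift hm (j := (((j : ZMod (m + l)).val : ℕ) : ℤ)) (intCast_val _) ?_
  refine ⟨H _, ?_, hH _⟩
  rw [intCast_val]

lemma Rep.set_ext {θ θ' : Set (Cyl m l)} {v : ZMod (m + l) → ℚ} (h : Rep m l θ v)
    (h' : Rep m l θ' v) : θ = θ' := by
  ext x
  obtain ⟨a, b, rfl⟩ := pr_surj x
  obtain ⟨H, h1, h2⟩ := h (b - a)
  obtain ⟨H', h1', h2'⟩ := h' (b - a)
  have e : H = H' := by
    have : (H : ℚ) = H' := by linarith
    exact_mod_cast this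
  have := h2 a
  have h3 := h2' a
  rw [add_sub_cancel] at this h3
  rw [this, h3, e]

/-- Heights on consecutive diagonals differ by `0` or `1`. -/
lemma filt_step {θ : Set (Cyl m l)} (hf : IsFilt m l θ) {j H H' : ℤ}
    (h : ∀ c : ℤ, pr m l (c, c + j) ∈ θ ↔ c ≤ H)
    (h' : ∀ c : ℤ, pr m l (c, c + (j + 1)) ∈ θ ↔ c ≤ H') : H = H' ∨ H = H' + 1 := by
  have a1 : H - 1 ≤ H' :=
    (h' _).mp (hf _ ((h H).mpr le_rfl) _ (cle_pr (by omega) (by omega)))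
  have a2 : H' ≤ H :=
    (h _).mp (hf _ ((h' H').mpr le_rfl) _ (cle_pr (by omega) (by omega)))
  omega

lemma Rep.good {θ : Set (Cyl m l)} {v : ZMod (m + l) → ℚ} (hf : IsFilt m l θ)
    (h : Rep m l θ v) : Good ((m : ℚ) / ((m : ℚ) + l)) v := by
  intro i
  obtain ⟨j, rfl⟩ := ZMod.intCast_surjective i
  obtain ⟨H, h1, h2⟩ := h j
  obtain ⟨H', h1', h2'⟩ := h (j + 1)
  have := filt_step hf h2 h2'
  push_cast at h1'
  rw [h1, h1']
  rcases this with rfl | rfl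
  · left; ring
  · right; push_cast; ring

/-- The values of the height function on three consecutive diagonals. -/
lemma Rep.three {θ : Set (Cyl m l)} {v : ZMod (m + l) → ℚ} (hf : IsFilt m l θ)
    (h : Rep m l θ v) (j : ℤ) : ∃ A B C : ℤ,
      (∀ c : ℤ, pr m l (c, c + (j - 1)) ∈ θ ↔ c ≤ A) ∧
      (∀ c : ℤ, pr m l (c, c + j) ∈ θ ↔ c ≤ B) ∧
      (∀ c : ℤ, pr m l (c, c + (j + 1)) ∈ θ ↔ c ≤ C) ∧
      (A = B ∨ A = B + 1) ∧ (B = C ∨ B = C + 1) ∧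
      v j = B + (m : ℚ) / ((m : ℚ) + l) * j ∧ lap v (j : ZMod (m + l)) = 2 * B - A - C := by
  obtain ⟨A, a1, a2⟩ := h (j - 1)
  obtain ⟨B, b1, b2⟩ := h j
  obtain ⟨C, c1, c2⟩ := h (j + 1)
  refine ⟨A, B, C, a2, b2, c2, filt_step hf a2 (by simpa using b2), filt_step hf b2 c2, b1, ?_⟩
  push_cast at a1 c1
  rw [lap, a1, b1, c1]
  ring

/-- Removing a minimal cell of content `i` lowers the height vector by `α_i`. -/
lemma Rep.remove (hm : 1 ≤ m) (hl : 1 ≤ l) {θ : Set (Cyl m l)} {v : ZMod (m + l) → ℚ}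
    (hf : IsFilt m l θ) (h : Rep m l θ v) {x : Cyl m l} (hx : IsMinl m l θ x) :
    lap v (con m l x) = 1 ∧ Rep m l (θ \ {x}) (v - Pi.single (con m l x) 1) := by
  obtain ⟨a, b, rfl⟩ := pr_surj x
  obtain ⟨hx1, hx2⟩ := hx
  obtain ⟨A, B, C, hA, hB, hC, h1, h2, h3, h4⟩ := h.three hf (b - a)
  -- No point of `ℤ²` other than `(a, b)` that is coordinatewise at least `(a, b)` lies over `θ`.
  have key : ∀ c d : ℤ, a ≤ c → b ≤ d → pr m l (c, d) ∈ θ → c = a ∧ d = b := by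
    intro c d hc hd hcd
    have := hx2 _ hcd (cle_pr hc hd)
    obtain ⟨k, rfl, rfl⟩ := pr_eq this
    have hm' : (0 : ℤ) < m := by exact_mod_cast hm
    have hl' : (0 : ℤ) < l := by exact_mod_cast hl
    have k1 : k ≤ 0 := by nlinarith
    have k2 : 0 ≤ k := by nlinarith
    have : k = 0 := le_antisymm k1 k2
    subst this
    simp
  have e1 : a ≤ B := (hB a).mp (by rwa [add_sub_cancel])
  have e2 : B ≤ a := by
    have := key B (B + (b - a)) e1 (by omega) ((hB B).mpr le_rfl)
    omega
  have e3 : A ≤ a := by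
    by_contra hlt
    push Not at hlt
    have := key (a + 1) (a + 1 + (b - a - 1)) (by omega) (by omega) ((hA (a + 1)).mpr (by omega))
    omega
  have e4 : C < a := by
    by_contra hlt
    push Not at hlt
    have := key a (a + (b - a + 1)) (by omega) (by omega) ((hC a).mpr (by omega))
    omega
  have hBa : B = a := le_antisymm e2 e1
  subst hBa
  have hAB : A = B := by omega
  have hCB : C = B - 1 := by omega
  constructor
  · rw [con_pr, h4, hAB, hCB]
    push_cast
    ring
  · intro j
    by_cases hj : (j : ZMod (m + l)) = con m l (pr m l (B, b))
    · rw [con_pr] at hj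
      refine RepAt.shift hm hj.symm ⟨B - 1, ?_, ?_⟩
      · rw [con_pr]
        simp only [Pi.sub_apply, Pi.single_eq_same, h3]
        push_cast
        ring
      · intro c
        constructor
        · rintro ⟨q1, q2⟩
          have := (hB c).mp q1
          have hne : c ≠ B := by
            rintro rfl
            apply q2
            simp
          omega
        · intro hc
          refine ⟨(hB c).mpr (by omega), ?_⟩
          intro heq
          obtain ⟨k, k1, k2⟩ := pr_eq (Set.mem_singleton_iff.mp heq)
          have : k * ((m : ℤ) + l) = 0 := by linarith
          have hk : k = 0 := by
            rcases mul_eq_zero.mp this with h | h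
            · exact h
            · omega
          subst hk
          omega
    · obtain ⟨H, q1, q2⟩ := h j
      refine ⟨H, ?_, ?_⟩
      · simp [hj, q1]
      · intro c
        rw [← q2 c]
        refine ⟨fun h => h.1, fun h => ⟨h, ?_⟩⟩
        intro heq
        apply hj
        rw [← Set.mem_singleton_iff.mp heq, con_pr]
        simp

/-- If the height vector pairs to `1` with `α_i^∨`, a cell of content `i` is removable. -/
lemma Rep.exists_min {θ : Set (Cyl m l)} {v : ZMod (m + l) → ℚ}
    (hf : IsFilt m l θ) (h : Rep m l θ v) {i : ZMod (m + l)} (hi : lap v i = 1) :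
    ∃ x, IsMinl m l θ x ∧ con m l x = i := by
  obtain ⟨j, rfl⟩ := ZMod.intCast_surjective i
  obtain ⟨A, B, C, hA, hB, hC, h1, h2, h3, h4⟩ := h.three hf j
  rw [hi] at h4
  have h5 : (1 : ℤ) = 2 * B - A - C := by exact_mod_cast h4
  refine ⟨pr m l (B, B + j), ⟨(hB B).mpr le_rfl, ?_⟩, by rw [con_pr]; simp⟩
  intro y hy hyx
  obtain ⟨c, d, rfl, hc, hd⟩ := cle_lift hyx
  by_cases hc' : B < c
  · have := (hA (B + 1)).mp (hf _ hy _ (cle_pr (by omega) (by omega)))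
    omega
  by_cases hd' : B + j < d
  · have := (hC B).mp (hf _ hy _ (cle_pr (by omega) (by omega)))
    omega
  congr 2 <;> omega

end Heights

/-! ### Tableaux as removal sequences -/

section Removal

variable {m l : ℕ}

/-- The cells of `T` can be removed from `θ` one after another, each being minimal among the cells
still present. These lists are the standard tableaux on the finite ideals of `θ`. -/
def RemSeq (m l : ℕ) : Set (Cyl m l) → List (Cyl m l) → Prop
  | _, [] => True
  | θ, x :: T => IsMinl m l θ x ∧ RemSeq m l (θ \ {x}) T

lemma diff_cons (θ : Set (Cyl m l)) (x : Cyl m l) (T : List (Cyl m l)) :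
    θ \ {y | y ∈ x :: T} = (θ \ {x}) \ {y | y ∈ T} := by
  ext y
  simp [and_assoc]

/-- Removing `T` from `θ` undoes the word of `T` on height vectors. -/
lemma RemSeq.rep [NeZero (m + l)] (hm : 1 ≤ m) (hl : 1 ≤ l) {T : List (Cyl m l)} :
    ∀ {θ : Set (Cyl m l)} {v : ZMod (m + l) → ℚ}, IsFilt m l θ → Rep m l θ v → RemSeq m l θ T →
    ∃ u, Rep m l (θ \ {y | y ∈ T}) u ∧ Good ((m : ℚ) / ((m : ℚ) + l)) u ∧
      wordProd (m + l) (T.map (con m l)) (u, 0) = (v, 0) ∧ ∑ i, v i = ∑ i, u i + T.length := by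
  induction T with
  | nil =>
    intro θ v hf hv _
    exact ⟨v, by simpa using hv, hv.good hf, rfl, by simp⟩
  | cons x T ih =>
    intro θ v hf hv ⟨hx, hT⟩
    obtain ⟨h1, h2⟩ := hv.remove hm hl hf hx
    obtain ⟨u, u1, u2, u3, u4⟩ := ih (hf.diff hx) h2 hT
    have hact : act (con m l x) v = v - Pi.single (con m l x) 1 := by rw [act, h1]
    refine ⟨u, by rwa [diff_cons], u2, ?_, ?_⟩
    · rw [List.map_cons, wordProd_cons, Function.comp_apply, u3, sFun_eq, ← hact]
      have h3 := lap_act (by omega) (con m l x) v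
      rw [h1] at h3
      conv_lhs => rw [act, h3, act, h1]
      rw [Pi.single_neg, sub_neg_eq_add, sub_add_cancel]
    · rw [← hact, sum_act, h1] at u4
      push_cast [List.length_cons]
      linarith

/-- A word that raises the total height by its full length, and produces the height vector of `θ`,
is the word of a removal sequence of `θ`: every letter has to remove a cell. -/
lemma exists_remSeq [NeZero (m + l)] (hm : 1 ≤ m) (hl : 1 ≤ l) {u : ZMod (m + l) → ℚ}
    (hu : Good ((m : ℚ) / ((m : ℚ) + l)) u) {L : List (ZMod (m + l))} :
    ∀ {θ : Set (Cyl m l)} {v : ZMod (m + l) → ℚ}, IsFilt m l θ → Rep m l θ v →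
    wordProd (m + l) L (u, 0) = (v, 0) → ∑ i, v i = ∑ i, u i + L.length →
    ∃ T, RemSeq m l θ T ∧ T.map (con m l) = L ∧ Rep m l (θ \ {y | y ∈ T}) u := by
  induction L with
  | nil =>
    intro θ v hf hv hw _
    obtain rfl : u = v := congrArg Prod.fst hw
    exact ⟨[], trivial, rfl, by simpa using hv⟩
  | cons i L ih =>
    intro θ v hf hv hw hs
    obtain ⟨v', w1, w2, w3⟩ := wordProd_good (by omega) hu L
    rw [wordProd_cons, Function.comp_apply, w1, sFun_eq] at hw
    obtain rfl : act i v' = v := congrArg Prod.fst hw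
    push_cast [List.length_cons] at hs
    rw [sum_act] at hs
    have hlap : lap v' i = -1 := by
      rcases w2.lap_cases i with h | h | h
      · linarith
      · linarith
      · exact h
    have hi : lap (act i v') i = 1 := by rw [lap_act (by omega), hlap, neg_neg]
    obtain ⟨x, hx, rfl⟩ := hv.exists_min hf hi
    obtain ⟨-, h2⟩ := hv.remove hm hl hf hx
    have e : act (con m l x) v' - Pi.single (con m l x) 1 = v' := by
      rw [act, hlap, Pi.single_neg, sub_neg_eq_add, add_sub_cancel_right]
    rw [e] at h2
    obtain ⟨T, t1, t2, t3⟩ := ih (hf.diff hx) h2 w1 (by rw [hlap] at hs; linarith)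
    exact ⟨x :: T, ⟨hx, t1⟩, by rw [List.map_cons, t2], by rwa [diff_cons]⟩

lemma RemSeq.props {T : List (Cyl m l)} : ∀ {θ : Set (Cyl m l)}, RemSeq m l θ T →
    (∀ x ∈ T, x ∈ θ) ∧ T.Pairwise (fun x y => ¬ cle m l y x) := by
  induction T with
  | nil => intro θ _; simp
  | cons x T ih =>
    intro θ ⟨hx, hT⟩
    obtain ⟨h1, h2⟩ := ih hT
    refine ⟨?_, List.pairwise_cons.mpr ⟨fun y hy hyx => ?_, h2⟩⟩
    · intro y hy
      rcases List.mem_cons.mp hy with rfl | hy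
      · exact hx.1
      · exact (h1 y hy).1
    · exact (h1 y hy).2 (hx.2 y (h1 y hy).1 hyx)

lemma remSeq_of {T : List (Cyl m l)} : ∀ {θ : Set (Cyl m l)}, (∀ x ∈ T, x ∈ θ) →
    (∀ x ∈ T, ∀ y ∈ θ, cle m l y x → y ∈ T) → T.Pairwise (fun x y => ¬ cle m l y x) →
    RemSeq m l θ T := by
  induction T with
  | nil => intro θ _ _ _; trivial
  | cons x T ih =>
    intro θ h1 h2 h3
    obtain ⟨h4, h5⟩ := List.pairwise_cons.mp h3
    refine ⟨⟨h1 x (by simp), fun y hy hyx => ?_⟩, ih ?_ ?_ h5⟩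
    · rcases List.mem_cons.mp (h2 x (by simp) y hy hyx) with h | h
      · exact h
      · exact absurd hyx (h4 y h)
    · intro y hy
      refine ⟨h1 y (by simp [hy]), ?_⟩
      rintro rfl
      exact h4 _ hy (cle_refl _)
    · rintro y hy z ⟨hz, hzx⟩ hzy
      rcases List.mem_cons.mp (h2 y (by simp [hy]) z hz hzy) with h | h
      · exact absurd h hzx
      · exact h

lemma nodup_of_pairwise {T : List (Cyl m l)} (h : T.Pairwise (fun x y => ¬ cle m l y x)) :
    T.Nodup := by
  refine h.imp ?_
  rintro x y hxy rfl
  exact hxy (cle_refl _)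

lemma wordProd_append_cons [NeZero (m + l)] (x : Cyl m l) (A B : List (Cyl m l))
    (h : ∀ a ∈ A, ¬ cle m l a x ∧ ¬ cle m l x a) :
    wordProd (m + l) ((A ++ x :: B).map (con m l)) =
      sFun (m + l) (con m l x) ∘ wordProd (m + l) ((A ++ B).map (con m l)) := by
  induction A with
  | nil => rfl
  | cons a A ih =>
    have ha := h a (by simp)
    have hn : ¬ (cle m l a x ∨ cle m l x a) := by tauto
    have hc := mt comparable hn
    push Not at hc
    simp only [List.cons_append, List.map_cons, wordProd_cons] at *
    rw [ih (fun b hb => h b (by simp [hb])), ← Function.comp_assoc,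
      sFun_comm _ _ hc.1 hc.2.1 hc.2.2, Function.comp_assoc]

/-- Two linear extensions of the same finite set of cells have the same product, because
incomparable cells have commuting reflections. -/
lemma wordProd_perm [NeZero (m + l)] {T : List (Cyl m l)} : ∀ {T' : List (Cyl m l)}, T.Perm T' →
    T.Pairwise (fun x y => ¬ cle m l y x) → T'.Pairwise (fun x y => ¬ cle m l y x) →
    wordProd (m + l) (T.map (con m l)) = wordProd (m + l) (T'.map (con m l)) := by
  induction T with
  | nil =>
    intro T' hp _ _
    rw [List.nil_perm.mp hp]
  | cons x T ih =>
    intro T' hp h1 h2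
    obtain ⟨A, B, rfl⟩ := List.append_of_mem (hp.subset (List.mem_cons_self))
    have hp' : T.Perm (A ++ B) := (hp.trans List.perm_middle).cons_inv
    obtain ⟨h3, h4⟩ := List.pairwise_cons.mp h1
    have h5 : ∀ a ∈ A, ¬ cle m l a x ∧ ¬ cle m l x a := fun a ha =>
      ⟨h3 a (hp'.symm.subset (by simp [ha])), (List.pairwise_append.mp h2).2.2 a ha x (by simp)⟩
    rw [wordProd_append_cons x A B h5, List.map_cons, wordProd_cons,
      ih hp' h4 (h2.sublist (List.Sublist.append_left (List.sublist_cons_self x B) A))]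

/-- The cells of a tableau listed in increasing order of their entries. -/
def tabList (e : ℕ → Cyl m l) (n : ℕ) : List (Cyl m l) := (List.range n).map fun k => e (k + 1)

lemma tabWord_eq (e : ℕ → Cyl m l) (n : ℕ) :
    tabWord m l e n = (tabList e n).map (con m l) := by
  simp [tabWord, tabList, Function.comp_def]

lemma mem_tabList {ξ : Set (Cyl m l)} {n : ℕ} {e : ℕ → Cyl m l} (h : IsTableauOn m l ξ n e)
    (x : Cyl m l) : x ∈ tabList e n ↔ x ∈ ξ := by
  rw [← h.2.1]
  simp only [tabList, List.mem_map, List.mem_range, Set.mem_image, Set.mem_Icc]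
  constructor
  · rintro ⟨k, hk, rfl⟩
    exact ⟨k + 1, by omega, rfl⟩
  · rintro ⟨k, hk, rfl⟩
    exact ⟨k - 1, by omega, by rw [Nat.sub_add_cancel hk.1]⟩

lemma pairwise_tabList {ξ : Set (Cyl m l)} {n : ℕ} {e : ℕ → Cyl m l}
    (h : IsTableauOn m l ξ n e) : (tabList e n).Pairwise (fun x y => ¬ cle m l y x) := by
  rw [tabList, List.pairwise_map]
  refine List.pairwise_lt_range.imp_of_mem ?_
  intro a b ha hb hab hle
  rw [List.mem_range] at ha hb
  have ha' : a + 1 ∈ Set.Icc 1 n := ⟨by omega, by omega⟩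
  have hb' : b + 1 ∈ Set.Icc 1 n := ⟨by omega, by omega⟩
  have hne : e (b + 1) ≠ e (a + 1) := fun heq => by
    have := h.1 hb' ha' heq
    omega
  have := h.2.2 _ _ hb' ha' hle hne
  omega

lemma exists_tableau {ξ : Set (Cyl m l)} {T : List (Cyl m l)}
    (hT : T.Pairwise (fun x y => ¬ cle m l y x)) (hξ : ∀ x, x ∈ T ↔ x ∈ ξ) :
    ∃ e, IsTableauOn m l ξ T.length e ∧ tabWord m l e T.length = T.map (con m l) := by
  have hget : ∀ a, ∀ ha : a ∈ Set.Icc 1 T.length,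
      T.getD (a - 1) 0 = T[a - 1]'(by have := ha.1; have := ha.2; omega) := by
    intro a ha
    exact List.getD_eq_getElem _ _ _
  refine ⟨fun k => T.getD (k - 1) 0, ⟨?_, ?_, ?_⟩, ?_⟩
  · intro a ha b hb hab
    simp only [hget a ha, hget b hb] at hab
    have := (nodup_of_pairwise hT).getElem_inj_iff.mp hab
    have := ha.1
    have := hb.1
    omega
  · ext x
    rw [← hξ, List.mem_iff_getElem]
    constructor
    · rintro ⟨a, ha, rfl⟩
      exact ⟨a - 1, _, (hget a ha).symm⟩
    · rintro ⟨k, hk, rfl⟩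
      exact ⟨k + 1, ⟨by omega, by omega⟩, hget (k + 1) ⟨by omega, by omega⟩⟩
  · intro a b ha hb hle hne
    simp only [hget a ha, hget b hb] at hle hne
    by_contra hlt
    have h1 : b - 1 < a - 1 := by
      rcases Nat.lt_or_ge (b - 1) (a - 1) with h | h
      · exact h
      · exfalso
        apply hne
        have := ha.1
        have := hb.1
        congr 1
        omega
    exact List.pairwise_iff_getElem.mp hT _ _ _ _ h1 hle
  · refine List.ext_getElem (by simp [tabWord]) ?_
    intro k h1 h2
    rw [List.length_map] at h2
    simp [tabWord, h2]

end Removal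


/-- Lemma 4.2: S ↦ (con(S⁻¹(1)), …, con(S⁻¹(n))) is a bijection from the standard
tableaux on ξ onto the reduced words for w_ξ. -/
theorem statement_15 (m l : ℕ) (hm : 1 ≤ m) (hl : 1 ≤ l)
    (θ : Set (Cyl m l)) (hθ : IsCylindric m l θ)
    (ξ : Set (Cyl m l)) (n : ℕ) (hξ : IsProperIdealOf m l θ ξ) (hcard : ξ.ncard = n)
    (e0 : ℕ → Cyl m l) (he0 : IsTableauOn m l ξ n e0) :
    (∀ e e' : ℕ → Cyl m l, IsTableauOn m l ξ n e → IsTableauOn m l ξ n e' →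
        tabWord m l e n = tabWord m l e' n → ∀ a ∈ Set.Icc 1 n, e a = e' a) ∧
    (∀ e : ℕ → Cyl m l, IsTableauOn m l ξ n e →
        wordProd (m + l) (tabWord m l e n) = wordProd (m + l) (tabWord m l e0 n) ∧
        len (m + l) (wordProd (m + l) (tabWord m l e n)) = n) ∧
    (∀ L : List (ZMod (m + l)), L.length = n →
        wordProd (m + l) L = wordProd (m + l) (tabWord m l e0 n) →
        len (m + l) (wordProd (m + l) L) = L.length →
        ∃ e : ℕ → Cyl m l, IsTableauOn m l ξ n e ∧ tabWord m l e n = L) := by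
  have : NeZero (m + l) := ⟨by omega⟩
  have hf : IsFilt m l θ := hθ.2.2
  obtain ⟨v, hv⟩ := exists_rep hm hθ
  have hmem0 := mem_tabList he0
  have hrem : RemSeq m l θ (tabList e0 n) := by
    refine remSeq_of (fun x hx => hξ.1 ((hmem0 x).mp hx)) ?_ (pairwise_tabList he0)
    intro x hx y hy hyx
    exact (hmem0 y).mpr (hξ.2.2 x ((hmem0 x).mp hx) y hy hyx)
  obtain ⟨u, hu, hgood, hprod, hsum⟩ := hrem.rep hm hl hf hv
  rw [← tabWord_eq] at hprod
  have hlen : (tabList e0 n).length = n := by simp [tabList]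
  rw [hlen] at hsum
  have hset : {y | y ∈ tabList e0 n} = ξ := Set.ext hmem0
  rw [hset] at hu
  have heq : ∀ e, IsTableauOn m l ξ n e →
      wordProd (m + l) (tabWord m l e n) = wordProd (m + l) (tabWord m l e0 n) := by
    intro e he
    rw [tabWord_eq, tabWord_eq]
    refine wordProd_perm ?_ (pairwise_tabList he) (pairwise_tabList he0)
    rw [List.perm_ext_iff_of_nodup (nodup_of_pairwise (pairwise_tabList he))
      (nodup_of_pairwise (pairwise_tabList he0))]
    intro x
    rw [mem_tabList he, hmem0]
  refine ⟨?_, ?_, ?_⟩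
  · intro e e' he he' hw
    have hcon : ∀ a ∈ Set.Icc 1 n, con m l (e a) = con m l (e' a) := by
      intro a ha
      have h1 := ha.1
      have h2 := ha.2
      have := congrArg (fun L => L[a - 1]?) hw
      simpa [tabWord, show a - 1 < n by omega, Nat.sub_add_cancel h1] using this
    -- The cell with entry `a` is the lowest cell of its content not carrying a smaller entry.
    have key : ∀ f f' : ℕ → Cyl m l, IsTableauOn m l ξ n f → IsTableauOn m l ξ n f' →
        ∀ a ∈ Set.Icc 1 n, (∀ b < a, b ∈ Set.Icc 1 n → f b = f' b) →
        cle m l (f a) (f' a) → f a = f' a := by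
      intro f f' hf1 hf2 a ha hlt hle
      by_contra hne
      have hfa : f a ∈ ξ := hf1.2.1 ▸ ⟨a, ha, rfl⟩
      rw [← hf2.2.1] at hfa
      obtain ⟨b, hb, hba⟩ := hfa
      have hlt' : b < a := hf2.2.2 b a hb ha (hba ▸ hle) (hba ▸ hne)
      have := hf1.1 hb ha ((hlt b hlt' hb).trans hba)
      omega
    intro a
    induction a using Nat.strong_induction_on with
    | _ a ih =>
      intro ha
      rcases comparable (Or.inl (sub_eq_zero.mpr (hcon a ha))) with h | h
      · exact key e e' he he' a ha ih h
      · exact (key e' e he' he a ha (fun b hb hb' => (ih b hb hb').symm) h).symm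
  · intro e he
    refine ⟨heq e he, ?_⟩
    rw [heq e he]
    refine le_antisymm (Nat.sInf_le ⟨_, by simp [tabWord], rfl⟩) ?_
    refine le_csInf ⟨n, tabWord m l e0 n, by simp [tabWord], rfl⟩ ?_
    rintro r ⟨L, rfl, hL⟩
    obtain ⟨v', h1, -, h3⟩ := wordProd_good (by omega) hgood L
    rw [hL, hprod] at h1
    obtain rfl : v = v' := congrArg Prod.fst h1
    have : (n : ℚ) ≤ L.length := by linarith
    exact_mod_cast this
  · intro L hL hw _
    obtain ⟨T, t1, t2, t3⟩ := exists_remSeq hm hl hgood hf hv (by rw [hw, hprod]) (by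
      rw [hL]; exact hsum)
    obtain ⟨t4, t5⟩ := t1.props
    have hdiff := t3.set_ext hu
    have hTξ : ∀ x, x ∈ T ↔ x ∈ ξ := by
      intro x
      have hx := Set.ext_iff.mp hdiff x
      simp only [Set.mem_sdiff, Set.mem_ofPred_eq] at hx
      have h1 := t4 x
      have h2 := @hξ.1 x
      tauto
    obtain ⟨e, he, hew⟩ := exists_tableau t5 hTξ
    have hTn : T.length = n := by rw [← hL, ← t2, List.length_map]
    rw [hTn] at he hew
    exact ⟨e, he, hew.trans t2⟩

end CylPaper
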